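/- For every positive integer b, the symmetrical antitree AT(1,b,1) (which has diameter 2) is Bonnet-Myers sharp. -/

import Mathlib

open scoped Classical
open Finset

noncomputable section

/-- The degree of a vertex `x` in the graph `G`. -/
def deg {V : Type*} [Fintype V] (G : SimpleGraph V) (x : V) : ℕ :=
  (Finset.univ.filter (fun y => G.Adj x y)).card

/-- The diameter of `G`: the maximum of the combinatorial distance over all pairs of vertices. -/
def diam {V : Type*} [Fintype V] (G : SimpleGraph V) : ℕ :=
  Finset.univ.sup (fun xy : V × V => G.dist xy.1 xy.2)

/-- The probability measure `μ_x^p` of the lazy simple random walk at `x` with idleness `p`. -/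
def mu {V : Type*} [Fintype V] (G : SimpleGraph V) (p : ℝ) (x : V) : V → ℝ :=
  fun z => if z = x then p else if G.Adj x z then (1 - p) / (deg G x : ℝ) else 0

/-- The Wasserstein distance `W₁(μ₁, μ₂)` with respect to the combinatorial distance of `G`:
the infimum of the total transport cost over all transport plans from `μ₁` to `μ₂`. -/
def W1 {V : Type*} [Fintype V] (G : SimpleGraph V) (μ₁ μ₂ : V → ℝ) : ℝ :=
  sInf {c : ℝ | ∃ π : V → V → ℝ,
    (∀ x y, 0 ≤ π x y ∧ π x y ≤ 1) ∧
    (∀ x, ∑ y, π x y = μ₁ x) ∧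
    (∀ y, ∑ x, π x y = μ₂ y) ∧
    c = ∑ x, ∑ y, (G.dist x y : ℝ) * π x y}

/-- The `p`-Ollivier-Ricci curvature `κ_p(x,y) = 1 - W₁(μ_x^p, μ_y^p)`. -/
def kappa {V : Type*} [Fintype V] (G : SimpleGraph V) (p : ℝ) (x y : V) : ℝ :=
  1 - W1 G (mu G p x) (mu G p y)

/-- The Lin-Lu-Yau curvature `κ_LLY(x,y) = lim_{p→1} κ_p(x,y)/(1-p)`. -/
def kappaLLY {V : Type*} [Fintype V] (G : SimpleGraph V) (x y : V) : ℝ :=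
  Filter.limUnder (nhdsWithin 1 (Set.Iio 1)) (fun p => kappa G p x y / (1 - p))

/-- `G` is Bonnet-Myers sharp if the infimum of `κ_LLY` over the edges equals `2/diam(G)`. -/
def BMSharp {V : Type*} [Fintype V] (G : SimpleGraph V) : Prop :=
  sInf {r : ℝ | ∃ x y, G.Adj x y ∧ r = kappaLLY G x y} = 2 / (diam G : ℝ)

/-- `G` is obtained from the complete graph on its vertex set by deleting a matching
(a set of pairwise disjoint edges, encoded as a symmetric irreflexive relation in which
every vertex has at most one partner). -/
def IsMatchingDeletionOfComplete {V : Type*} (G : SimpleGraph V) : Prop :=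
  ∃ M : V → V → Prop, Symmetric M ∧ (∀ x, ¬ M x x) ∧
    (∀ x y z, M x y → M x z → y = z) ∧
    (∀ x y, G.Adj x y ↔ x ≠ y ∧ ¬ M x y)

/-- The graph `G(a,b)` on `2a+b` vertices `u_1, …, u_{2a}, v_1, …, v_b` (encoded as
`Fin (2a+b)`, with `u_i` the index `i-1` and `v_j` the index `2a+j-1`), in which two distinct
vertices are adjacent unless they form a pair `{u_{2i-1}, u_{2i}}`, i.e. `G(a,b)` is the
complete graph `K_{2a+b}` with a matching of size `a` deleted. -/
def Gab (a b : ℕ) : SimpleGraph (Fin (2*a+b)) where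
  Adj x y := x ≠ y ∧ ¬((x : ℕ) < 2*a ∧ (y : ℕ) < 2*a ∧ (x : ℕ)/2 = (y : ℕ)/2)
  symm := by
    refine ⟨fun x y h => ?_⟩
    exact ⟨h.1.symm, fun hc => h.2 ⟨hc.2.1, hc.1, hc.2.2.symm⟩⟩
  loopless := by refine ⟨fun x h => ?_⟩; exact h.1 rfl

/-- The antitree `AT(a_1, …, a_N)` on the disjoint union of sets `V_1, …, V_N` with
`|V_k| = a_k` (0-indexed here: `V_k` is `Fin (a k)` for `k : Fin N`): two distinct vertices
are adjacent iff they lie in the same set or in consecutive sets. -/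
def antitree (N : ℕ) (a : Fin N → ℕ) : SimpleGraph (Σ k : Fin N, Fin (a k)) where
  Adj x y := x ≠ y ∧
    ((x.1 : ℕ) = (y.1 : ℕ) ∨ (x.1 : ℕ) + 1 = (y.1 : ℕ) ∨ (y.1 : ℕ) + 1 = (x.1 : ℕ))
  symm := by
    refine ⟨fun x y h => ?_⟩
    refine ⟨h.1.symm, ?_⟩
    rcases h.2 with h2 | h2 | h2
    · exact Or.inl h2.symm
    · exact Or.inr (Or.inr h2)
    · exact Or.inr (Or.inl h2)
  loopless := by refine ⟨fun x h => ?_⟩; exact h.1 rfl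


theorem W1_eq_of {V : Type*} [Fintype V] (G : SimpleGraph V) (μ₁ μ₂ : V → ℝ) (c : ℝ)
    (π : V → V → ℝ) (f : V → ℝ) (h0 : ∀ x y, 0 ≤ π x y) (h1 : ∀ x, μ₁ x ≤ 1)
    (hr : ∀ x, ∑ y, π x y = μ₁ x) (hc : ∀ y, ∑ x, π x y = μ₂ y)
    (hcost : ∑ x, ∑ y, (G.dist x y : ℝ) * π x y = c)
    (hf : ∀ x y, f x - f y ≤ G.dist x y)
    (hd : ∑ x, f x * μ₁ x - ∑ x, f x * μ₂ x = c) : W1 G μ₁ μ₂ = c := by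
  unfold W1
  apply IsLeast.csInf_eq
  constructor
  · refine ⟨π, fun x y => ⟨h0 x y, ?_⟩, hr, hc, hcost.symm⟩
    refine le_trans ?_ (h1 x)
    rw [← hr x]
    exact Finset.single_le_sum (fun z _ => h0 x z) (Finset.mem_univ y)
  · rintro c' ⟨ρ, hρ, hr', hc', rfl⟩
    rw [← hd]
    have e1 : ∑ x, f x * μ₁ x = ∑ x, ∑ y, f x * ρ x y := by
      refine Finset.sum_congr rfl fun x _ => ?_
      rw [← hr' x, Finset.mul_sum]
    have e2 : ∑ x, f x * μ₂ x = ∑ x, ∑ y, f y * ρ x y := by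
      rw [Finset.sum_comm]
      refine Finset.sum_congr rfl fun x _ => ?_
      rw [← hc' x, Finset.mul_sum]
    rw [e1, e2, ← Finset.sum_sub_distrib]
    refine Finset.sum_le_sum fun x _ => ?_
    rw [← Finset.sum_sub_distrib]
    refine Finset.sum_le_sum fun y _ => ?_
    rw [← sub_mul]
    exact mul_le_mul_of_nonneg_right (hf x y) (hρ x y).1

theorem W1_symm' {V : Type*} [Fintype V] (G : SimpleGraph V) (μ₁ μ₂ : V → ℝ) :
    W1 G μ₁ μ₂ = W1 G μ₂ μ₁ := by
  unfold W1
  congr 1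
  ext c
  constructor
  · rintro ⟨π, h, hr, hc, rfl⟩
    refine ⟨fun x y => π y x, fun x y => h y x, hc, hr, ?_⟩
    rw [Finset.sum_comm]
    simp only [G.dist_comm]
  · rintro ⟨π, h, hr, hc, rfl⟩
    refine ⟨fun x y => π y x, fun x y => h y x, hc, hr, ?_⟩
    rw [Finset.sum_comm]
    simp only [G.dist_comm]

theorem LLY_symm' {V : Type*} [Fintype V] (G : SimpleGraph V) (x y : V) :
    kappaLLY G x y = kappaLLY G y x := by
  unfold kappaLLY kappa
  simp only [W1_symm' G (mu G _ x)]

def ee {V : Type*} (a x : V) : ℝ := if x = a then 1 else 0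

/-- Complete graph minus the edge `s t`. -/
structure KM {V : Type*} [Fintype V] (G : SimpleGraph V) (s t : V) (b : ℕ) : Prop where
  hb : 0 < b
  st : s ≠ t
  adj : ∀ x y, G.Adj x y ↔ x ≠ y ∧ ¬ (x = s ∧ y = t) ∧ ¬ (x = t ∧ y = s)
  card : Fintype.card V = b + 2

namespace KM

variable {V : Type*} [Fintype V] {G : SimpleGraph V} {s t : V} {b : ℕ}

theorem swap (h : KM G s t b) : KM G t s b :=
  ⟨h.hb, h.st.symm, fun x y => by rw [h.adj]; tauto, h.card⟩

theorem exists_mid (h : KM G s t b) : ∃ m, m ≠ s ∧ m ≠ t := by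
  by_contra hc
  push Not at hc
  have : (Finset.univ : Finset V) ⊆ {s, t} := by
    intro x _
    by_cases hx : x = s
    · simp [hx]
    · simp [hc x hx]
  have h1 := (Finset.card_le_card this).trans Finset.card_le_two
  rw [Finset.card_univ, h.card] at h1
  have := h.hb
  omega

theorem dist_st (h : KM G s t b) : G.dist s t = 2 := by
  obtain ⟨m, hs, ht⟩ := h.exists_mid
  have a1 : G.Adj s m := by rw [h.adj]; have := h.st; grind
  have a2 : G.Adj m t := by rw [h.adj]; have := h.st; grind
  let w : G.Walk s t := .cons a1 (.cons a2 .nil)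
  have hle : G.dist s t ≤ 2 := SimpleGraph.dist_le w
  have h0 : 0 < G.dist s t := w.reachable.pos_dist_of_ne h.st
  have h1 : G.dist s t ≠ 1 := by
    rw [Ne, SimpleGraph.dist_eq_one_iff_adj, h.adj]
    tauto
  omega

theorem dist_eq (h : KM G s t b) (x y : V) :
    (G.dist x y : ℝ) = 1 - ee x y + ee s x * ee t y + ee t x * ee s y := by
  have hst := h.st
  by_cases hxy : x = y
  · subst hxy
    simp only [ee, SimpleGraph.dist_self]
    split_ifs <;> simp_all
  · by_cases ha : G.Adj x y
    · rw [SimpleGraph.dist_eq_one_iff_adj.2 ha]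
      rw [h.adj] at ha
      simp only [ee]
      split_ifs <;> simp_all
    · rw [h.adj] at ha
      have : (x = s ∧ y = t) ∨ (x = t ∧ y = s) := by tauto
      rcases this with ⟨rfl, rfl⟩ | ⟨rfl, rfl⟩
      · rw [h.dist_st]; simp [ee, hst, hst.symm]; norm_num
      · rw [h.swap.dist_st]; simp [ee, hst, hst.symm]; norm_num

theorem diam_eq (h : KM G s t b) : diam G = 2 := by
  apply le_antisymm
  · refine Finset.sup_le fun xy _ => ?_
    have := h.dist_eq xy.1 xy.2
    have h2 : (G.dist xy.1 xy.2 : ℝ) ≤ 2 := by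
      rw [this]
      have := h.st
      simp only [ee]
      split_ifs <;> norm_num <;> grind
    exact_mod_cast h2
  · rw [← h.dist_st]
    exact Finset.le_sup (f := fun xy : V × V => G.dist xy.1 xy.2) (Finset.mem_univ (s, t))

theorem deg_s (h : KM G s t b) : deg G s = b := by
  have : Finset.univ.filter (fun y => G.Adj s y) = (Finset.univ.erase s).erase t := by
    ext y
    have := h.st
    simp only [Finset.mem_filter, h.adj, Finset.mem_erase, Finset.mem_univ]
    grind
  rw [deg, this, Finset.card_erase_of_mem, Finset.card_erase_of_mem, Finset.card_univ, h.card]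
  · rfl
  · simp
  · simp [h.st.symm]

theorem deg_m (h : KM G s t b) {m : V} (hs : m ≠ s) (ht : m ≠ t) : deg G m = b + 1 := by
  have : Finset.univ.filter (fun y => G.Adj m y) = Finset.univ.erase m := by
    ext y
    simp only [Finset.mem_filter, h.adj, Finset.mem_erase, Finset.mem_univ]
    grind
  rw [deg, this, Finset.card_erase_of_mem, Finset.card_univ, h.card]
  · rfl
  · simp

theorem mu_s (h : KM G s t b) (p : ℝ) (z : V) :
    mu G p s z = p * ee s z + (1 - p) / b * (1 - ee s z - ee t z) := by
  have := h.st
  simp only [mu, h.deg_s, h.adj, ee]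
  split_ifs <;> simp_all

theorem mu_m (h : KM G s t b) {m : V} (hs : m ≠ s) (ht : m ≠ t) (p : ℝ) (z : V) :
    mu G p m z = p * ee m z + (1 - p) / (b + 1) * (1 - ee m z) := by
  simp only [mu, h.deg_m hs ht, h.adj, ee]
  split_ifs <;> simp_all

theorem sum_ee (a : V) : ∑ x, ee a x = 1 := by simp [ee]
theorem sum_ee' (a : V) : ∑ x, ee x a = 1 := by simp [ee]
theorem sum_ee_mul (a : V) (f : V → ℝ) : ∑ x, ee a x * f x = f a := by simp [ee]
theorem sum_ee_mul' (a : V) (f : V → ℝ) : ∑ x, ee x a * f x = f a := by simp [ee]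

theorem sum_one (h : KM G s t b) : ∑ _x : V, (1 : ℝ) = b + 2 := by
  simp [h.card]

theorem W_mm (h : KM G s t b) {m n : V} (hs : m ≠ s) (ht : m ≠ t) (ns : n ≠ s) (nt : n ≠ t)
    (hmn : m ≠ n) {p : ℝ} (hp : 1 / 2 < p) (hp1 : p < 1) :
    W1 G (mu G p m) (mu G p n) = p - (1 - p) / (b + 1) := by
  have hb : (0 : ℝ) < b := by exact_mod_cast h.hb
  set q := (1 - p) / ((b : ℝ) + 1) with hq
  have q0 : 0 ≤ q := by apply div_nonneg <;> linarith
  have q1 : q ≤ 1 - p := by rw [hq]; apply div_le_self <;> linarith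
  apply W1_eq_of G _ _ _ (fun x y => ee x y * q + ee m x * (ee n y * (p - q))) (fun x => ee m x)
  · intro x y
    simp only [ee]
    split_ifs <;> linarith
  · intro x
    rw [h.mu_m hs ht, ← hq]
    simp only [ee]
    split_ifs <;> linarith
  · intro x
    rw [h.mu_m hs ht, ← hq, Finset.sum_add_distrib, ← Finset.sum_mul, ← Finset.mul_sum,
      ← Finset.sum_mul, sum_ee, sum_ee]
    ring
  · intro x
    rw [h.mu_m ns nt, ← hq, Finset.sum_add_distrib, ← Finset.sum_mul,
      ← Finset.sum_mul, sum_ee, sum_ee']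
    ring
  · have : ∀ x y, (G.dist x y : ℝ) * (ee x y * q + ee m x * (ee n y * (p - q)))
        = ee m x * (ee n y * (p - q)) := by
      intro x y
      rw [h.dist_eq]
      have := h.st
      simp only [ee]
      split_ifs <;> simp_all
    simp only [this, ← Finset.mul_sum, ← Finset.sum_mul, sum_ee]
    ring
  · intro x y
    rw [h.dist_eq]
    have := h.st
    simp only [ee]
    split_ifs <;> norm_num <;> simp_all
  · rw [sum_ee_mul, sum_ee_mul, h.mu_m hs ht, h.mu_m ns nt, ← hq]
    simp [ee, hmn]

set_option maxHeartbeats 1000000 in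
theorem W_sm (h : KM G s t b) {m : V} (hs : m ≠ s) (ht : m ≠ t)
    {p : ℝ} (hp : 1 / 2 < p) (hp1 : p < 1) :
    W1 G (mu G p s) (mu G p m) = p := by
  have hst := h.st
  have hb : (0 : ℝ) < b := by exact_mod_cast h.hb
  have hb1 : (1 : ℝ) ≤ b := by exact_mod_cast h.hb
  set q := (1 - p) / ((b : ℝ) + 1) with hq
  set r := q / b with hr
  have q0 : 0 ≤ q := by apply div_nonneg <;> linarith
  have q1 : q ≤ 1 - p := by rw [hq]; apply div_le_self <;> linarith
  have r0 : 0 ≤ r := by apply div_nonneg <;> linarith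
  have hbr : b * r = q := by rw [hr]; field_simp
  have hqr : (1 - p) / b = q + r := by rw [hr, hq]; field_simp
  have hbq : (b + 1) * q = 1 - p := by rw [hq]; field_simp
  have hqr1 : q + r ≤ 1 - p := by rw [← hqr]; apply div_le_self <;> linarith
  apply W1_eq_of G _ _ _ (fun x y => ee x y * (q * (1 - ee t x))
    + (ee t y * (1 - ee s x - ee t x)) * r + ee s x * ee m y * (p - q))
    (fun x => 1 + ee s x - ee t x)
  · intro x y
    simp only [ee]
    split_ifs <;> simp_all <;> linarith
  · intro x
    rw [h.mu_s, hqr]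
    simp only [ee]
    split_ifs <;> linarith
  · intro x
    rw [h.mu_s, hqr]
    simp only [Finset.sum_add_distrib, ← Finset.sum_mul, ← Finset.mul_sum, sum_ee]
    simp only [ee]
    split_ifs <;> simp_all
  · intro y
    rw [h.mu_m hs ht, ← hq]
    simp only [Finset.sum_add_distrib, ← Finset.sum_mul, ← Finset.mul_sum, sum_ee, sum_ee_mul',
      Finset.sum_sub_distrib, h.sum_one]
    simp only [ee]
    split_ifs <;> simp_all <;> linarith
  · have : ∀ x y, (G.dist x y : ℝ) * (ee x y * (q * (1 - ee t x))
      + (ee t y * (1 - ee s x - ee t x)) * r + ee s x * ee m y * (p - q))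
        = (ee t y * (1 - ee s x - ee t x)) * r + ee s x * ee m y * (p - q) := by
      intro x y
      rw [h.dist_eq]
      simp only [ee]
      split_ifs <;> simp_all
    simp only [this, Finset.sum_add_distrib, ← Finset.sum_mul, ← Finset.mul_sum, sum_ee,
      Finset.sum_sub_distrib, h.sum_one]
    linarith
  · intro x y
    rw [h.dist_eq]
    simp only [ee]
    split_ifs <;> norm_num <;> simp_all
  · have e1 : ∀ g : V → ℝ, ∑ x, (1 + ee s x - ee t x) * g x = ∑ x, g x + g s - g t := by
      intro g
      simp only [sub_mul, add_mul, Finset.sum_sub_distrib, Finset.sum_add_distrib, sum_ee_mul,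
        one_mul]
    rw [e1, e1]
    simp only [h.mu_s, h.mu_m hs ht, hqr, ← hq]
    simp only [Finset.sum_add_distrib, ← Finset.mul_sum, sum_ee,
      Finset.sum_sub_distrib, h.sum_one]
    simp [ee, hst, hst.symm, hs.symm, ht.symm]
    linarith

theorem lly_of {x y : V} {c : ℝ}
    (hW : ∀ p : ℝ, 1 / 2 < p → p < 1 → W1 G (mu G p x) (mu G p y) = 1 - c * (1 - p)) :
    kappaLLY G x y = c := by
  unfold kappaLLY
  apply Filter.Tendsto.limUnder_eq
  apply tendsto_const_nhds.congr'
  have : Set.Ioo (1 / 2 : ℝ) 1 ∈ nhdsWithin (1 : ℝ) (Set.Iio 1) :=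
    Ioo_mem_nhdsLT (by norm_num)
  filter_upwards [this] with p hp
  have : 1 - p ≠ 0 := by have := hp.2; linarith
  rw [kappa, hW p hp.1 hp.2]
  field_simp
  ring

theorem lly_sm (h : KM G s t b) {m : V} (hs : m ≠ s) (ht : m ≠ t) : kappaLLY G s m = 1 :=
  lly_of fun p hp hp1 => by rw [h.W_sm hs ht hp hp1]; ring

theorem lly_mm (h : KM G s t b) {m n : V} (hs : m ≠ s) (ht : m ≠ t) (ns : n ≠ s) (nt : n ≠ t)
    (hmn : m ≠ n) : kappaLLY G m n = 1 + 1 / (b + 1) :=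
  lly_of fun p hp hp1 => by rw [h.W_mm hs ht ns nt hmn hp hp1]; field_simp; ring

theorem sharp (h : KM G s t b) : BMSharp G := by
  unfold BMSharp
  rw [h.diam_eq]
  have : (2 : ℝ) / ((2 : ℕ) : ℝ) = 1 := by norm_num
  rw [this]
  apply IsLeast.csInf_eq
  constructor
  · obtain ⟨m, hs, ht⟩ := h.exists_mid
    refine ⟨s, m, ?_, (h.lly_sm hs ht).symm⟩
    rw [h.adj]; have := h.st; grind
  · rintro r ⟨x, y, ha, rfl⟩
    rw [h.adj] at ha
    have hst := h.st
    by_cases xs : x = s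
    · subst xs
      exact (h.lly_sm (by grind) (by grind)).ge
    by_cases xt : x = t
    · subst xt
      exact (h.swap.lly_sm (by grind) (by grind)).ge
    by_cases ys : y = s
    · subst ys
      rw [LLY_symm']
      exact (h.lly_sm (by grind) (by grind)).ge
    by_cases yt : y = t
    · subst yt
      rw [LLY_symm']
      exact (h.swap.lly_sm (by grind) (by grind)).ge
    rw [h.lly_mm xs xt ys yt ha.1]
    have : (0 : ℝ) ≤ 1 / (b + 1) := by positivity
    linarith

end KM

/-- Every symmetrical antitree `AT(1,b,1)` of diameter 2 is Bonnet-Myers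
sharp. -/
theorem stmt17 (b : ℕ) (hb : 0 < b) :
    BMSharp (antitree 3 ![1, b, 1]) := by
  have h : KM (antitree 3 ![1, b, 1]) ⟨0, (0 : Fin 1)⟩ ⟨2, (0 : Fin 1)⟩ b := by
    refine ⟨hb, ?_, ?_, ?_⟩
    · intro hc
      have := congrArg Sigma.fst hc
      simp at this
    · have k0 : ∀ x : (Σ k : Fin 3, Fin (![1, b, 1] k)), x = ⟨0, (0 : Fin 1)⟩ ↔ x.1 = 0 := by
        rintro ⟨k, i⟩
        constructor
        · intro hx; exact congrArg Sigma.fst hx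
        · intro hx
          simp only at hx
          subst hx
          congr 1
          exact Subsingleton.elim (α := Fin 1) _ _
      have k2 : ∀ x : (Σ k : Fin 3, Fin (![1, b, 1] k)), x = ⟨2, (0 : Fin 1)⟩ ↔ x.1 = 2 := by
        rintro ⟨k, i⟩
        constructor
        · intro hx; exact congrArg Sigma.fst hx
        · intro hx
          simp only at hx
          subst hx
          congr 1
          exact Subsingleton.elim (α := Fin 1) _ _
      intro x y
      rw [k0, k2, k0, k2]
      simp only [antitree]
      apply and_congr_right
      intro _
      generalize x.1 = i
      generalize y.1 = j
      revert i j
      decide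
    · simp [Fintype.card_sigma, Fin.sum_univ_three]
      omega
  exact h.sharp
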